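/- (Harmonic measure lower bound on the slit) Let r ∈ (0,1), let I₀ ⊆ ℝ be an interval with 0 < |I₀| ≤ 1, and Σ = {x + iy : |y| < r} \ I₀. If t ∈ Σ ∩ ℝ satisfies d(t, I₀) ≤ 1, then the harmonic measure of each side I_± of the slit satisfies μ_t^Σ(I_±) ≥ (|I₀|/8) e^{−2/r}. -/

import Mathlib

open MeasureTheory Set Filter

/-- A continuous function is harmonic on an open set `U ⊆ ℂ` if it satisfies the
mean value property on all sufficiently small circles around each point of `U`. -/
def HarmonicOnSet (u : ℂ → ℝ) (U : Set ℂ) : Prop :=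
  ContinuousOn u U ∧
  ∀ z ∈ U, ∀ᶠ ρ in nhdsWithin (0 : ℝ) (Set.Ioi (0 : ℝ)),
    u z = (2 * Real.pi)⁻¹ *
      ∫ θ in (0 : ℝ)..(2 * Real.pi), u (z + (Complex.ofReal ρ) * Complex.exp ((θ : ℂ) * Complex.I))

/-!
Harmonic measure decreases when the domain shrinks, so the slit strip may be replaced by the
strip slit along the whole half-line that contains the slit and points away from `t`. This smaller
domain is mapped conformally onto the upper half-plane by `z ↦ i √(exp (κ (z - c)) - 1)`, where
`|κ| = π / r` and `c` is the endpoint of the slit nearest to `t`. One side of the slit becomes a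
segment with endpoint `0`, the point `t` lands on the imaginary axis, and the harmonic measure of a
segment in the half-plane is the angle under which it is seen, divided by `π`.
-/

open scoped Topology Real

open UpperHalfPlane (upperHalfPlaneSet isOpen_upperHalfPlaneSet)

section HarmonicOnSet

variable {u v : ℂ → ℝ} {U V : Set ℂ}

theorem HarmonicOnSet.mono (hu : HarmonicOnSet u U) (hVU : V ⊆ U) : HarmonicOnSet u V :=
  ⟨hu.1.mono hVU, fun z hz => hu.2 z (hVU hz)⟩

theorem harmonicOnSet_iff_circleAverage_eq :
    HarmonicOnSet u U ↔
      ContinuousOn u U ∧ ∀ z ∈ U, ∀ᶠ ρ in 𝓝[>] (0 : ℝ), Real.circleAverage u z ρ = u z := by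
  simp only [eq_comm (b := u _)]
  rfl

theorem eventually_pos_and_closedBall_subset {E : Type*} [PseudoMetricSpace E] {s : Set E}
    (hs : IsOpen s) {x : E} (hx : x ∈ s) :
    ∀ᶠ ρ in 𝓝[>] (0 : ℝ), 0 < ρ ∧ Metric.closedBall x ρ ⊆ s :=
  eventually_mem_nhdsWithin.and
    ((eventually_closedBall_subset (hs.mem_nhds hx)).filter_mono nhdsWithin_le_nhds)

theorem HarmonicOnSet.sub (hU : IsOpen U) (hu : HarmonicOnSet u U) (hv : HarmonicOnSet v U) :
    HarmonicOnSet (fun z => u z - v z) U := by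
  rw [harmonicOnSet_iff_circleAverage_eq] at hu hv ⊢
  refine ⟨hu.1.sub hv.1, fun z hz => ?_⟩
  filter_upwards [hu.2 z hz, hv.2 z hz, eventually_pos_and_closedBall_subset hU hz]
    with ρ huρ hvρ ⟨hρ, hball⟩
  have hsphere : Metric.sphere z ρ ⊆ U := Metric.sphere_subset_closedBall.trans hball
  rw [Real.circleAverage_fun_sub ((hu.1.mono hsphere).circleIntegrable hρ.le)
    ((hv.1.mono hsphere).circleIntegrable hρ.le), huρ, hvρ]

theorem harmonicOnSet_im {F : ℂ → ℂ} (hU : IsOpen U) (hF : DifferentiableOn ℂ F U) :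
    HarmonicOnSet (fun z => (F z).im) U := by
  refine harmonicOnSet_iff_circleAverage_eq.2
    ⟨Complex.continuous_im.comp_continuousOn hF.continuousOn, fun z hz => ?_⟩
  filter_upwards [eventually_pos_and_closedBall_subset hU hz] with ρ ⟨hρ, hball⟩
  refine InnerProductSpace.HarmonicOnNhd.circleAverage_eq fun w hw => ?_
  rw [abs_of_pos hρ] at hw
  exact (hF.analyticAt (hU.mem_nhds (hball hw))).harmonicAt_im

theorem eqOn_sphere_of_le_of_circleAverage_eq {f : ℂ → ℝ} {c : ℂ} {R m : ℝ}
    (hf : ContinuousOn f (Metric.sphere c |R|)) (hm : ∀ z ∈ Metric.sphere c |R|, m ≤ f z)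
    (havg : Real.circleAverage f c R = m) : ∀ z ∈ Metric.sphere c |R|, f z = m := by
  intro z hz
  by_contra! hne
  obtain ⟨θ, hθ, rfl⟩ := (image_circleMap_Ioc c R).symm.subset hz
  have hlt : ∫ _ in 0..2 * π, m < ∫ θ in 0..2 * π, f (circleMap c R θ) :=
    intervalIntegral.integral_lt_integral_of_continuousOn_of_le_of_exists_lt Real.two_pi_pos
      continuousOn_const
      (hf.comp_continuous (continuous_circleMap c R) (circleMap_mem_sphere' c R)).continuousOn
      (fun φ _ => hm _ (circleMap_mem_sphere' c R φ))
      ⟨θ, Ioc_subset_Icc_self hθ, (hm _ hz).lt_of_ne' hne⟩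
  rw [intervalIntegral.integral_const, sub_zero, smul_eq_mul] at hlt
  rw [Real.circleAverage_def, smul_eq_mul, inv_mul_eq_iff_eq_mul₀ Real.two_pi_pos.ne'] at havg
  exact hlt.ne' havg

theorem HarmonicOnSet.nonneg_of_isCompact_sublevel (hU : IsOpen U) (hu : HarmonicOnSet u U)
    (hcomp : ∀ δ > 0, IsCompact {z ∈ U | u z ≤ -δ}) : ∀ z ∈ U, 0 ≤ u z := by
  intro z hz
  by_contra! hneg
  have hK : IsCompact {w ∈ U | u w ≤ u z} := by simpa using hcomp (-u z) (by linarith)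
  have hKcont : ContinuousOn u {w ∈ U | u w ≤ u z} := hu.1.mono fun w hw => hw.1
  obtain ⟨z₁, hz₁, hmin⟩ := hK.exists_isMinOn ⟨z, hz, le_rfl⟩ hKcont
  have hminU : ∀ w ∈ U, u z₁ ≤ u w := fun w hw =>
    (le_total (u w) (u z)).elim (fun h => hmin ⟨hw, h⟩) hz₁.2.trans
  have hM : IsCompact ({w ∈ U | u w ≤ u z} ∩ u ⁻¹' {u z₁}) :=
    hK.of_isClosed_subset
      (hKcont.preimage_isClosed_of_isClosed hK.isClosed isClosed_singleton) inter_subset_left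
  -- Small circles around a minimum point consist of minimum points, so none is rightmost.
  obtain ⟨z₀, ⟨hz₀, hz₀min⟩, hright⟩ := hM.exists_isMaxOn ⟨z₁, hz₁, rfl⟩
    Complex.continuous_re.continuousOn
  obtain ⟨ρ, havg, hρ, hball⟩ := (((harmonicOnSet_iff_circleAverage_eq.1 hu).2 z₀ hz₀.1).and
    (eventually_pos_and_closedBall_subset hU hz₀.1)).exists
  have hsphere : Metric.sphere z₀ |ρ| ⊆ U := by
    rw [abs_of_pos hρ]
    exact Metric.sphere_subset_closedBall.trans hball
  have hmem : z₀ + ρ ∈ Metric.sphere z₀ |ρ| := by simp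
  have heq : u (z₀ + ρ) = u z₁ :=
    eqOn_sphere_of_le_of_circleAverage_eq (hu.1.mono hsphere) (fun w hw => hminU w (hsphere hw))
      (havg.trans hz₀min) _ hmem
  have hle : (z₀ + ρ).re ≤ z₀.re := hright ⟨⟨hsphere hmem, heq.trans_le hz₁.2⟩, heq⟩
  simp only [Complex.add_re, Complex.ofReal_re] at hle
  linarith

theorem isCompact_sublevel_of_eventually_lt {E β : Type*} [PseudoMetricSpace E] [ProperSpace E]
    [TopologicalSpace β] [LinearOrder β] [OrderClosedTopology β] {s : Set E} {g : E → β} {c : β}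
    (hg : ContinuousOn g s) (hbdry : ∀ x ∈ closure s \ s, ∀ᶠ w in 𝓝[s] x, c < g w)
    (hinf : ∀ᶠ w in Bornology.cobounded E ⊓ 𝓟 s, c < g w) : IsCompact {w ∈ s | g w ≤ c} := by
  refine Metric.isCompact_of_isClosed_isBounded (isClosed_iff_frequently.2 fun x hfreq => ?_) ?_
  · have hfreq' : ∃ᶠ w in 𝓝[s] x, g w ≤ c :=
      frequently_nhdsWithin_iff.2 (hfreq.mono fun w hw => hw.symm)
    by_cases hx : x ∈ s
    · exact ⟨hx, le_of_tendsto_of_frequently (hg x hx) hfreq'⟩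
    · have hcl : x ∈ closure s := mem_closure_iff_frequently.2 (hfreq.mono fun w hw => hw.1)
      obtain ⟨w, hle, hlt⟩ := (hfreq'.and_eventually (hbdry x ⟨hcl, hx⟩)).exists
      exact absurd hlt hle.not_gt
  · rw [← Bornology.isCobounded_compl_iff, Bornology.isCobounded_def]
    filter_upwards [eventually_inf_principal.1 hinf] with w hw hmem
    exact (hw hmem.1).not_ge hmem.2

-- The mean value property gives no direct handle on `u ∘ e.symm`, so harmonicity is used on the
-- source of `e` only, while the boundary behaviour is examined on the target.
theorem HarmonicOnSet.nonneg_of_eventually_symm_gt {E : Type*} [PseudoMetricSpace E]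
    [ProperSpace E] {e : OpenPartialHomeomorph ℂ E} (hu : HarmonicOnSet u e.source)
    (hbdry : ∀ δ > 0, ∀ x ∈ frontier e.target, ∀ᶠ w in 𝓝[e.target] x, -δ < u (e.symm w))
    (hinf : ∀ δ > 0, ∀ᶠ w in Bornology.cobounded E ⊓ 𝓟 e.target, -δ < u (e.symm w)) :
    ∀ z ∈ e.source, 0 ≤ u z := by
  refine hu.nonneg_of_isCompact_sublevel e.open_source fun δ hδ => ?_
  have himage : e.symm '' {w ∈ e.target | u (e.symm w) ≤ -δ} = {z ∈ e.source | u z ≤ -δ} :=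
    (e.symm.image_source_inter_eq' _).trans (e.source_inter_preimage_inv_preimage {z | u z ≤ -δ})
  rw [← himage]
  refine (isCompact_sublevel_of_eventually_lt
    (hu.1.comp e.continuousOn_symm fun w hw => e.map_target hw) ?_
    (hinf δ hδ)).image_of_continuousOn (e.continuousOn_symm.mono fun w hw => hw.1)
  rw [← e.open_target.frontier_eq]
  exact hbdry δ hδ

end HarmonicOnSet

section HalfPlaneHarmonicMeasure

theorem sub_ofReal_ne_zero_of_im_ne_zero {w : ℂ} (hw : w.im ≠ 0) (x : ℝ) : w - x ≠ 0 :=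
  fun h => hw (by simpa using congrArg Complex.im h)

theorem arg_one_add_mul_I (x : ℝ) : (1 + x * Complex.I).arg = Real.arctan x := by
  have hbound := abs_lt.1 (Complex.abs_arg_lt_pi_div_two_iff.2
    (Or.inl (by simp : 0 < (1 + x * Complex.I).re)))
  rw [← Real.arctan_tan hbound.1 hbound.2, Complex.tan_arg]
  simp

theorem arg_one_add_mul_I_div_one_add_mul_I (x y : ℝ) :
    ((1 + x * Complex.I) / (1 + y * Complex.I)).arg = Real.arctan x - Real.arctan y := by
  have hne (x : ℝ) : 1 + x * Complex.I ≠ 0 := fun h => by simpa using congrArg Complex.re h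
  have hx := Real.arctan_mem_Ioo x
  have hy := Real.arctan_mem_Ioo y
  have hinv : (1 + y * Complex.I)⁻¹.arg = -Real.arctan y := by
    rw [Complex.arg_inv, arg_one_add_mul_I, if_neg (by linarith [hy.2, Real.pi_pos])]
  rw [div_eq_mul_inv, Complex.arg_mul (hne x) (inv_ne_zero (hne y)), arg_one_add_mul_I, hinv,
    sub_eq_add_neg]
  rw [arg_one_add_mul_I, hinv]
  constructor <;> linarith [hx.1, hx.2, hy.1, hy.2]

theorem arg_sub_div_sub (α β : ℝ) {w : ℂ} (hw : w.im ≠ 0) :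
    ((w - β) / (w - α)).arg =
      Real.arctan ((β - w.re) / w.im) - Real.arctan ((α - w.re) / w.im) := by
  have hsub (x : ℝ) : w - x = Complex.I * w.im * (1 + ((x - w.re) / w.im : ℝ) * Complex.I) := by
    have him : (w.im : ℂ) ≠ 0 := Complex.ofReal_ne_zero.2 hw
    nth_rw 1 [← Complex.re_add_im w]
    push_cast
    field_simp
    linear_combination (w.re - x : ℂ) * Complex.I_sq
  have hfactor : Complex.I * w.im ≠ 0 :=
    mul_ne_zero Complex.I_ne_zero (Complex.ofReal_ne_zero.2 hw)
  rw [hsub β, hsub α, mul_div_mul_left _ _ hfactor, arg_one_add_mul_I_div_one_add_mul_I]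

theorem sub_div_sub_mem_slitPlane (α β : ℝ) {w : ℂ} (hw : w.im ≠ 0) :
    (w - β) / (w - α) ∈ Complex.slitPlane := by
  refine Complex.mem_slitPlane_iff_arg.2 ⟨?_, div_ne_zero
    (sub_ofReal_ne_zero_of_im_ne_zero hw β) (sub_ofReal_ne_zero_of_im_ne_zero hw α)⟩
  rw [arg_sub_div_sub α β hw]
  refine ne_of_lt ?_
  linarith [Real.arctan_lt_pi_div_two ((β - w.re) / w.im),
    Real.neg_pi_div_two_lt_arctan ((α - w.re) / w.im)]

/-- The harmonic measure of `[α, β]` in the upper half-plane seen from `w`: the angle under which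
the segment is seen from `w`, divided by `π`. That angle is the argument of the cross ratio
`(w - β) / (w - α)`. -/
noncomputable def halfPlaneHarmonicMeasure (α β : ℝ) (w : ℂ) : ℝ :=
  ((w - β) / (w - α)).arg / π

theorem halfPlaneHarmonicMeasure_le_one (α β : ℝ) (w : ℂ) : halfPlaneHarmonicMeasure α β w ≤ 1 :=
  div_le_one_of_le₀ (Complex.arg_le_pi _) Real.pi_pos.le

theorem tendsto_halfPlaneHarmonicMeasure_of_notMem {α β : ℝ} (hαβ : α ≤ β) {x : ℝ}
    (hx : x ∉ Icc α β) :
    Tendsto (halfPlaneHarmonicMeasure α β) (𝓝 (x : ℂ)) (𝓝 0) := by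
  have hpos : 0 < (x - β) / (x - α) := by
    rcases lt_or_ge x α with h | h
    · exact div_pos_of_neg_of_neg (by linarith) (by linarith)
    · have hβx : β < x := lt_of_not_ge fun h' => hx ⟨h, h'⟩
      exact div_pos (by linarith) (by linarith)
  have hne : (x : ℂ) - α ≠ 0 := fun h => by
    rw [← Complex.ofReal_sub, Complex.ofReal_eq_zero] at h
    simp [h] at hpos
  have hval : ((x : ℂ) - β) / (x - α) = ((x - β) / (x - α) : ℝ) := by push_cast; rfl
  have hcross : Tendsto (fun w : ℂ => (w - β) / (w - α)) (𝓝 x) (𝓝 ((x - β) / (x - α) : ℝ)) :=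
    hval ▸ ContinuousAt.div (by fun_prop) (by fun_prop) hne
  have harg := (Complex.continuousAt_arg (Complex.ofReal_mem_slitPlane.2 hpos)).tendsto.comp hcross
  rw [Complex.arg_ofReal_of_nonneg hpos.le] at harg
  rw [← zero_div π]
  exact harg.div_const π

theorem tendsto_halfPlaneHarmonicMeasure_cobounded (α β : ℝ) :
    Tendsto (halfPlaneHarmonicMeasure α β) (Bornology.cobounded ℂ) (𝓝 0) := by
  have hinv : Tendsto (fun w : ℂ => (w - α)⁻¹) (Bornology.cobounded ℂ) (𝓝 0) := by
    simpa only [sub_eq_add_neg, Function.comp_def] using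
      tendsto_inv₀_cobounded.comp (tendsto_add_const_cobounded (-(α : ℂ)))
  have hcross : Tendsto (fun w : ℂ => (w - β) / (w - α)) (Bornology.cobounded ℂ) (𝓝 1) := by
    have hlim : Tendsto (fun w : ℂ => 1 + (α - β) * (w - α)⁻¹) (Bornology.cobounded ℂ) (𝓝 1) := by
      simpa using (hinv.const_mul ((α : ℂ) - β)).const_add 1
    refine hlim.congr' ?_
    filter_upwards [Bornology.eventually_ne_cobounded (α : ℂ)] with w hw
    have hne : w - α ≠ 0 := sub_ne_zero.2 hw
    field_simp
    ring
  have harg := (Complex.continuousAt_arg Complex.one_mem_slitPlane).tendsto.comp hcross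
  rw [Complex.arg_one] at harg
  rw [← zero_div π]
  exact harg.div_const π

theorem continuous_halfPlaneHarmonicMeasure_endpoints {w : ℂ} (hw : w.im ≠ 0) :
    Continuous fun p : ℝ × ℝ => halfPlaneHarmonicMeasure p.1 p.2 w := by
  simp only [halfPlaneHarmonicMeasure, arg_sub_div_sub _ _ hw]
  fun_prop

end HalfPlaneHarmonicMeasure

section Comparison

theorem harmonicOnSet_halfPlaneHarmonicMeasure_comp (α β : ℝ) {U : Set ℂ}
    (hU : IsOpen U) {ψ : ℂ → ℂ} (hψ : DifferentiableOn ℂ ψ U)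
    (hmaps : MapsTo ψ U upperHalfPlaneSet) :
    HarmonicOnSet (fun z => halfPlaneHarmonicMeasure α β (ψ z)) U := by
  have hlog : DifferentiableOn ℂ (fun z => Complex.log ((ψ z - β) / (ψ z - α)) / π) U :=
    (((hψ.sub_const _).div (hψ.sub_const _)
      fun z hz => sub_ofReal_ne_zero_of_im_ne_zero (hmaps hz).ne' α).clog
      fun z hz => sub_div_sub_mem_slitPlane α β (hmaps hz).ne').div_const _
  simpa only [halfPlaneHarmonicMeasure, Complex.div_ofReal_im, Complex.log_im] using
    harmonicOnSet_im hU hlog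

variable {u : ℂ → ℝ} {e : OpenPartialHomeomorph ℂ ℂ}

theorem halfPlaneHarmonicMeasure_le_of_tendsto_Icc (he : DifferentiableOn ℂ e e.source)
    (htarget : e.target = upperHalfPlaneSet) (hu : HarmonicOnSet u e.source)
    (hnonneg : ∀ z ∈ e.source, 0 ≤ u z) {α β : ℝ} (hαβ : α ≤ β)
    (hlim : ∀ x ∈ Icc α β, Tendsto (fun w => u (e.symm w)) (𝓝[upperHalfPlaneSet] (x : ℂ)) (𝓝 1)) :
    ∀ z ∈ e.source, halfPlaneHarmonicMeasure α β (e z) ≤ u z := by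
  have hmaps : MapsTo e e.source upperHalfPlaneSet := fun z hz => htarget ▸ e.map_source hz
  have hharm := hu.sub e.open_source
    (harmonicOnSet_halfPlaneHarmonicMeasure_comp α β e.open_source he hmaps)
  -- Where the explicit harmonic measure is small, nonnegativity of `u` suffices.
  have hsmall {w : ℂ} (hw : w ∈ e.target) {δ : ℝ} (hlt : halfPlaneHarmonicMeasure α β w < δ) :
      -δ < u (e.symm w) - halfPlaneHarmonicMeasure α β (e (e.symm w)) := by
    rw [e.right_inv hw]
    linarith [hnonneg _ (e.map_target hw)]
  suffices ∀ z ∈ e.source, 0 ≤ u z - halfPlaneHarmonicMeasure α β (e z) from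
    fun z hz => sub_nonneg.1 (this z hz)
  refine hharm.nonneg_of_eventually_symm_gt (fun δ hδ w hw => ?_) fun δ hδ => ?_
  · obtain ⟨x, rfl⟩ : ∃ x : ℝ, w = x := by
      rw [htarget, upperHalfPlaneSet, Complex.frontier_setOfPred_lt_im] at hw
      exact ⟨w.re, Complex.ext rfl hw⟩
    by_cases hx : x ∈ Icc α β
    · filter_upwards [htarget ▸ (hlim x hx).eventually_const_lt (show 1 - δ < 1 by linarith),
        self_mem_nhdsWithin] with w hlt hw
      rw [e.right_inv hw]
      linarith [halfPlaneHarmonicMeasure_le_one α β w]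
    · filter_upwards [nhdsWithin_le_nhds
        ((tendsto_halfPlaneHarmonicMeasure_of_notMem hαβ hx).eventually_lt_const hδ),
        self_mem_nhdsWithin] with w hlt hw
      exact hsmall hw hlt
  · filter_upwards [mem_inf_of_left
      ((tendsto_halfPlaneHarmonicMeasure_cobounded α β).eventually_lt_const hδ),
      mem_inf_of_right (mem_principal_self _)] with w hlt hw
    exact hsmall hw hlt

theorem halfPlaneHarmonicMeasure_le_of_tendsto_Ioo (he : DifferentiableOn ℂ e e.source)
    (htarget : e.target = upperHalfPlaneSet) (hu : HarmonicOnSet u e.source)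
    (hnonneg : ∀ z ∈ e.source, 0 ≤ u z) {α β : ℝ} (hαβ : α < β)
    (hlim : ∀ x ∈ Ioo α β, Tendsto (fun w => u (e.symm w)) (𝓝[upperHalfPlaneSet] (x : ℂ)) (𝓝 1))
    {z : ℂ} (hz : z ∈ e.source) : halfPlaneHarmonicMeasure α β (e z) ≤ u z := by
  have him : 0 < (e z).im := show e z ∈ upperHalfPlaneSet from htarget ▸ e.map_source hz
  have hshrink : Tendsto (fun p : ℝ => halfPlaneHarmonicMeasure (α + p) (β - p) (e z)) (𝓝[>] 0)
      (𝓝 (halfPlaneHarmonicMeasure α β (e z))) := by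
    have hcont : Continuous fun p : ℝ => halfPlaneHarmonicMeasure (α + p) (β - p) (e z) :=
      (continuous_halfPlaneHarmonicMeasure_endpoints him.ne').comp
        (by fun_prop : Continuous fun p : ℝ => (α + p, β - p))
    simpa using (hcont.tendsto 0).mono_left nhdsWithin_le_nhds
  refine le_of_tendsto hshrink ?_
  filter_upwards [Ioo_mem_nhdsGT (show 0 < (β - α) / 2 by linarith)] with p hp
  exact halfPlaneHarmonicMeasure_le_of_tendsto_Icc he htarget hu hnonneg (by linarith [hp.2])
    (fun x hx => hlim x ⟨by linarith [hp.1, hx.1], by linarith [hp.1, hx.2]⟩) z hz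

end Comparison

section SlitStrip

theorem neg_sq_mem_slitPlane {w : ℂ} (hw : 0 < w.im) : -w ^ 2 ∈ Complex.slitPlane := by
  by_cases hre : w.re = 0
  · refine Or.inl ?_
    simp only [Complex.neg_re, sq, Complex.mul_re, hre]
    nlinarith
  · refine Or.inr ?_
    simp only [Complex.neg_im, sq, Complex.mul_im]
    intro him
    exact mul_ne_zero hre hw.ne' (by linarith)

/-- The conformal map `z ↦ i √z` of `ℂ \ (-∞, 0]` onto the upper half-plane, with inverse
`w ↦ -w ^ 2`. -/
@[simps]
noncomputable def slitPlaneToUpperHalfPlane : OpenPartialHomeomorph ℂ ℂ where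
  toFun z := Complex.I * z ^ (2⁻¹ : ℂ)
  invFun w := -w ^ 2
  source := Complex.slitPlane
  target := upperHalfPlaneSet
  map_source' z hz := by
    have habs : |z.re| < ‖z‖ ∨ 0 < z.re :=
      hz.symm.imp_left fun him => Complex.abs_re_lt_norm.2 him
    have hpos : 0 < ‖z‖ + z.re := by
      rcases habs with h | h
      · linarith [neg_abs_le z.re]
      · positivity
    change 0 < (Complex.I * z ^ (2⁻¹ : ℂ)).im
    rw [Complex.I_mul_im, Complex.cpow_inv_two_re]
    exact Real.sqrt_pos.2 (half_pos hpos)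
  map_target' w hw := neg_sq_mem_slitPlane hw
  left_inv' z _ := by
    rw [mul_pow, Complex.I_sq, Complex.cpow_ofNat_inv_pow]
    ring
  right_inv' w hw := by
    have hre : 0 < (-Complex.I * w).re := by simpa using hw
    have hsq : -w ^ 2 = (-Complex.I * w) ^ 2 := by
      rw [mul_pow, neg_sq, Complex.I_sq, neg_one_mul]
    rw [hsq, Complex.sq_cpow_two_inv hre, ← mul_assoc, mul_neg, Complex.I_mul_I, neg_neg, one_mul]
  open_source := Complex.isOpen_slitPlane
  open_target := isOpen_upperHalfPlaneSet
  continuousOn_toFun := continuousOn_const.mul (continuousOn_id.cpow_const fun _ hz => hz)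
  continuousOn_invFun := by fun_prop

/-- The conformal map `z ↦ i √(exp (κ (z - c)) - 1)` onto the upper half-plane. Up to the affine
change of variables `z ↦ κ (z - c)`, its source is the strip `|Im z| < π` slit along `(-∞, 0]`. -/
noncomputable def slitStripToUpperHalfPlane (κ : ℝ) (hκ : κ ≠ 0) (c : ℝ) :
    OpenPartialHomeomorph ℂ ℂ :=
  ((Homeomorph.subRight (c : ℂ)).trans (Homeomorph.mulLeft₀ (κ : ℂ)
    (Complex.ofReal_ne_zero.2 hκ))).transOpenPartialHomeomorph
    ((Complex.expOpenPartialHomeomorph.trans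
      (Homeomorph.subRight (1 : ℂ)).toOpenPartialHomeomorph).trans slitPlaneToUpperHalfPlane)

variable {κ c : ℝ} (hκ : κ ≠ 0)

@[simp]
theorem slitStripToUpperHalfPlane_apply (z : ℂ) :
    slitStripToUpperHalfPlane κ hκ c z =
      Complex.I * (Complex.exp (κ * (z - c)) - 1) ^ (2⁻¹ : ℂ) :=
  rfl

@[simp]
theorem slitStripToUpperHalfPlane_symm_apply (w : ℂ) :
    (slitStripToUpperHalfPlane κ hκ c).symm w = c + Complex.log (1 - w ^ 2) / κ := by
  have hsymm : (slitStripToUpperHalfPlane κ hκ c).symm w =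
      (κ : ℂ)⁻¹ * Complex.log (-w ^ 2 + 1) + c := rfl
  rw [hsymm]
  ring_nf

theorem mem_slitStripToUpperHalfPlane_source {z : ℂ} :
    z ∈ (slitStripToUpperHalfPlane κ hκ c).source ↔
      κ * z.im ∈ Ioo (-π) π ∧ Complex.exp (κ * (z - c)) - 1 ∈ Complex.slitPlane := by
  have him : (κ * (z - c)).im = κ * z.im := by simp
  rw [← him]
  simp only [slitStripToUpperHalfPlane, Homeomorph.transOpenPartialHomeomorph_source,
    OpenPartialHomeomorph.trans_source, Homeomorph.toOpenPartialHomeomorph_source,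
    preimage_univ, inter_univ]
  rfl

theorem slitStripToUpperHalfPlane_target :
    (slitStripToUpperHalfPlane κ hκ c).target = upperHalfPlaneSet := by
  ext w
  suffices 0 < w.im → -w ^ 2 + 1 ∈ Complex.expOpenPartialHomeomorph.target by
    simpa [slitStripToUpperHalfPlane]
  intro hw
  refine (neg_sq_mem_slitPlane hw).imp (fun hre => ?_) fun him => ?_
  · simpa using hre.trans (lt_add_one _)
  · simpa using him

theorem differentiableOn_slitStripToUpperHalfPlane :
    DifferentiableOn ℂ (slitStripToUpperHalfPlane κ hκ c)
      (slitStripToUpperHalfPlane κ hκ c).source :=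
  (DifferentiableOn.cpow (by fun_prop) (by fun_prop)
    fun z hz => ((mem_slitStripToUpperHalfPlane_source hκ).1 hz).2).const_mul Complex.I

theorem ofReal_mem_slitStripToUpperHalfPlane_source {x : ℝ} :
    (x : ℂ) ∈ (slitStripToUpperHalfPlane κ hκ c).source ↔ 0 < κ * (x - c) := by
  have hexp : Complex.exp (κ * (x - c)) - 1 = (Real.exp (κ * (x - c)) - 1 : ℝ) := by
    push_cast
    rfl
  rw [mem_slitStripToUpperHalfPlane_source, hexp, Complex.ofReal_mem_slitPlane]
  simp [Real.pi_pos]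

theorem slitStripToUpperHalfPlane_source_subset {r : ℝ} (hr : 0 < r) (hκr : |κ| = π / r)
    {K : Set ℝ} (hK : ∀ x ∈ K, κ * (x - c) ≤ 0) :
    (slitStripToUpperHalfPlane κ hκ c).source ⊆ {z | |z.im| < r} \ (Complex.ofReal '' K) := by
  refine fun z hz => ⟨?_, ?_⟩
  · have him : |κ * z.im| < π := abs_lt.2 ((mem_slitStripToUpperHalfPlane_source hκ).1 hz).1
    rw [abs_mul, hκr, div_mul_eq_mul_div, div_lt_iff₀ hr] at him
    exact lt_of_mul_lt_mul_left him Real.pi_pos.le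
  · rintro ⟨x, hx, rfl⟩
    exact (hK x hx).not_gt ((ofReal_mem_slitStripToUpperHalfPlane_source hκ).1 hz)

theorem slitStripToUpperHalfPlane_ofReal {t : ℝ} (ht : 0 ≤ κ * (t - c)) :
    slitStripToUpperHalfPlane κ hκ c t = Complex.I * √(Real.exp (κ * (t - c)) - 1) := by
  have hpos : 0 ≤ Real.exp (κ * (t - c)) - 1 := sub_nonneg.2 (Real.one_le_exp ht)
  rw [slitStripToUpperHalfPlane_apply, Real.sqrt_eq_rpow, Complex.ofReal_cpow hpos]
  norm_num

theorem mul_arg_pos_of_mul_im_pos {s : ℝ} {z : ℂ} (h : 0 < s * z.im) : 0 < s * z.arg := by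
  rcases mul_pos_iff.1 h with ⟨hs, him⟩ | ⟨hs, him⟩
  · refine mul_pos hs ((Complex.arg_nonneg_iff.2 him.le).lt_of_ne' fun harg => ?_)
    exact him.ne' (Complex.arg_eq_zero_iff.1 harg).2
  · exact mul_pos_of_neg_of_neg hs (Complex.arg_neg_iff.2 him)

theorem tendsto_slitStripToUpperHalfPlane_symm_side {σ x : ℝ} (hσ : σ / κ * x < 0)
    (hx : 0 < 1 - x ^ 2) :
    Tendsto (slitStripToUpperHalfPlane κ hκ c).symm (𝓝[upperHalfPlaneSet] (x : ℂ))
      (𝓝[{z | 0 < σ * z.im}] ((c + Real.log (1 - x ^ 2) / κ : ℝ) : ℂ)) := by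
  have hcast : 1 - (x : ℂ) ^ 2 = (1 - x ^ 2 : ℝ) := by push_cast; rfl
  have hcont : Tendsto (fun w : ℂ => c + Complex.log (1 - w ^ 2) / κ) (𝓝 (x : ℂ))
      (𝓝 ((c + Real.log (1 - x ^ 2) / κ : ℝ) : ℂ)) := by
    have hval : ((c + Real.log (1 - x ^ 2) / κ : ℝ) : ℂ) =
        c + Complex.log (1 - (x : ℂ) ^ 2) / κ := by
      rw [hcast, ← Complex.ofReal_log hx.le]
      push_cast
      rfl
    rw [hval]
    refine continuousAt_const.add (ContinuousAt.div_const (ContinuousAt.clog (by fun_prop) ?_) _)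
    exact hcast ▸ Complex.ofReal_mem_slitPlane.2 hx
  refine tendsto_nhdsWithin_iff.2 ⟨?_, ?_⟩
  · exact (hcont.mono_left nhdsWithin_le_nhds).congr fun w =>
      (slitStripToUpperHalfPlane_symm_apply hκ w).symm
  have hre : ∀ᶠ w : ℂ in 𝓝 (x : ℂ), σ / κ * w.re < 0 :=
    ContinuousAt.eventually_lt (by fun_prop) continuousAt_const (by simpa using hσ)
  filter_upwards [nhdsWithin_le_nhds hre, self_mem_nhdsWithin] with w hwre (hwim : 0 < w.im)
  have him : (1 - w ^ 2).im = -2 * (w.re * w.im) := by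
    simp [sq]
    ring
  have hpos : 0 < σ / κ * (1 - w ^ 2).im := by
    rw [him]
    nlinarith
  have hside : σ * ((slitStripToUpperHalfPlane κ hκ c).symm w).im = σ / κ * (1 - w ^ 2).arg := by
    rw [slitStripToUpperHalfPlane_symm_apply, Complex.add_im, Complex.ofReal_im,
      Complex.div_ofReal_im, Complex.log_im]
    ring
  exact (mul_arg_pos_of_mul_im_pos hpos).trans_eq hside.symm

end SlitStrip

section SideOfSlit

variable {u : ℂ → ℝ}

theorem arctan_div_pi_le_of_tendsto_side_of_slit {κ c t σ L : ℝ} (hκ : κ ≠ 0) (hσ : σ ≠ 0)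
    (hL : 0 < L) (ht : 0 < κ * (t - c))
    (hu : HarmonicOnSet u (slitStripToUpperHalfPlane κ hκ c).source)
    (hnonneg : ∀ z ∈ (slitStripToUpperHalfPlane κ hκ c).source, 0 ≤ u z)
    (hside : ∀ x : ℝ, κ * (x - c) ∈ Ioo (-L) 0 →
      Tendsto u (𝓝[{z : ℂ | 0 < σ * z.im}] (x : ℂ)) (𝓝 1)) :
    Real.arctan (√(1 - Real.exp (-L)) / √(Real.exp (κ * (t - c)) - 1)) / π ≤ u t := by
  set s := √(1 - Real.exp (-L))
  set τ := √(Real.exp (κ * (t - c)) - 1)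
  have hs_sq : s ^ 2 = 1 - Real.exp (-L) := Real.sq_sqrt (by simpa using hL.le)
  have hs : 0 < s := Real.sqrt_pos.2 (by simpa using hL)
  have hτ : 0 < τ := Real.sqrt_pos.2 (by simpa using ht)
  have hlim (x : ℝ) (hx : σ / κ * x < 0) (hxs : x ^ 2 < s ^ 2) :
      Tendsto (fun w => u ((slitStripToUpperHalfPlane κ hκ c).symm w))
        (𝓝[upperHalfPlaneSet] (x : ℂ)) (𝓝 1) := by
    have hxpos : 0 < x ^ 2 := sq_pos_of_ne_zero fun h => by simp [h] at hx
    have hexp : Real.exp (-L) < 1 - x ^ 2 := by linarith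
    have hx1 : 0 < 1 - x ^ 2 := (Real.exp_pos _).trans hexp
    refine (hside _ ?_).comp (tendsto_slitStripToUpperHalfPlane_symm_side hκ hx hx1)
    rw [add_sub_cancel_left, mul_div_cancel₀ _ hκ]
    exact ⟨(Real.lt_log_iff_exp_lt hx1).2 hexp, Real.log_neg hx1 (by linarith)⟩
  have hcompare {α β : ℝ} (hαβ : α < β)
      (hx : ∀ x ∈ Ioo α β, σ / κ * x < 0 ∧ x ^ 2 < s ^ 2) :
      halfPlaneHarmonicMeasure α β (Complex.I * τ) ≤ u t := by
    rw [← slitStripToUpperHalfPlane_ofReal hκ ht.le]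
    exact halfPlaneHarmonicMeasure_le_of_tendsto_Ioo
      (differentiableOn_slitStripToUpperHalfPlane hκ) (slitStripToUpperHalfPlane_target hκ)
      hu hnonneg hαβ (fun x hmem => hlim x (hx x hmem).1 (hx x hmem).2)
      ((ofReal_mem_slitStripToUpperHalfPlane_source hκ).2 ht)
  have him : (Complex.I * τ).im ≠ 0 := by simpa using hτ.ne'
  rcases lt_or_gt_of_ne (div_ne_zero hσ hκ) with hneg | hpos
  · have h := hcompare hs fun x hx =>
      ⟨mul_neg_of_neg_of_pos hneg hx.1, pow_lt_pow_left₀ hx.2 hx.1.le two_ne_zero⟩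
    rw [halfPlaneHarmonicMeasure, arg_sub_div_sub _ _ him] at h
    simpa using h
  · have h := hcompare (neg_lt_zero.2 hs) fun x hx =>
      ⟨mul_neg_of_pos_of_neg hpos hx.2, sq_lt_sq.2 (by
        rw [abs_of_neg hx.2, abs_of_pos hs]
        linarith [hx.1])⟩
    rw [halfPlaneHarmonicMeasure, arg_sub_div_sub _ _ him] at h
    simpa [neg_div, Real.arctan_neg] using h

theorem infDist_Icc_of_le_left {a b t : ℝ} (hab : a ≤ b) (ht : t ≤ a) :
    Metric.infDist t (Icc a b) = a - t := by
  refine le_antisymm ?_ ((Metric.le_infDist (nonempty_Icc.2 hab)).2 fun x hx => ?_)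
  · simpa [Real.dist_eq, abs_of_nonpos (sub_nonpos.2 ht)] using
      Metric.infDist_le_dist_of_mem (x := t) (left_mem_Icc.2 hab)
  · linarith [hx.1, neg_le_abs (t - x), Real.dist_eq t x]

theorem infDist_Icc_of_right_le {a b t : ℝ} (hab : a ≤ b) (ht : b ≤ t) :
    Metric.infDist t (Icc a b) = t - b := by
  refine le_antisymm ?_ ((Metric.le_infDist (nonempty_Icc.2 hab)).2 fun x hx => ?_)
  · simpa [Real.dist_eq, abs_of_nonneg (sub_nonneg.2 ht)] using
      Metric.infDist_le_dist_of_mem (x := t) (right_mem_Icc.2 hab)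
  · linarith [hx.2, le_abs_self (t - x), Real.dist_eq t x]

theorem exists_affine_normalization {a b t ρ : ℝ} (hab : a ≤ b) (ht : t ∉ Icc a b)
    (hρ : 0 < ρ) :
    ∃ κ c : ℝ, |κ| = ρ ∧ κ * (t - c) = ρ * Metric.infDist t (Icc a b) ∧
      (∀ x ∈ Icc a b, κ * (x - c) ≤ 0) ∧
      ∀ x, κ * (x - c) ∈ Ioo (-(ρ * (b - a))) 0 → x ∈ Ioo a b := by
  rcases lt_or_ge t a with hta | hat
  · refine ⟨-ρ, a, by rw [abs_neg, abs_of_pos hρ], ?_, fun x hx => ?_, fun x hx => ?_⟩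
    · rw [infDist_Icc_of_le_left hab hta.le]
      ring
    · nlinarith [hx.1]
    · constructor <;> nlinarith [hx.1, hx.2]
  · have hbt : b < t := lt_of_not_ge fun htb => ht ⟨hat, htb⟩
    refine ⟨ρ, b, abs_of_pos hρ, ?_, fun x hx => ?_, fun x hx => ?_⟩
    · rw [infDist_Icc_of_right_le hab hbt.le]
    · nlinarith [hx.2]
    · constructor <;> nlinarith [hx.1, hx.2]

theorem arctan_div_pi_le_of_tendsto_side_of_Icc {r a b t σ : ℝ} (hr : 0 < r) (hab : a < b)
    (ht : t ∉ Icc a b) (hσ : σ ≠ 0)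
    (hu : HarmonicOnSet u ({z | |z.im| < r} \ (Complex.ofReal '' Icc a b)))
    (hnonneg : ∀ z ∈ {z : ℂ | |z.im| < r} \ (Complex.ofReal '' Icc a b), 0 ≤ u z)
    (hside : ∀ x ∈ Ioo a b, Tendsto u (𝓝[{z : ℂ | 0 < σ * z.im}] (x : ℂ)) (𝓝 1)) :
    Real.arctan (√(1 - Real.exp (-(π / r * (b - a)))) /
      √(Real.exp (π / r * Metric.infDist t (Icc a b)) - 1)) / π ≤ u t := by
  have hρ : 0 < π / r := div_pos Real.pi_pos hr
  obtain ⟨κ, c, hκ, hdist, hslit, hinterior⟩ := exists_affine_normalization hab.le ht hρ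
  have hκ0 : κ ≠ 0 := abs_pos.1 (hκ ▸ hρ)
  have hsub := slitStripToUpperHalfPlane_source_subset hκ0 hr hκ hslit
  have hdist_pos : 0 < Metric.infDist t (Icc a b) :=
    (isClosed_Icc.notMem_iff_infDist_pos (nonempty_Icc.2 hab.le)).1 ht
  rw [← hdist]
  exact arctan_div_pi_le_of_tendsto_side_of_slit hκ0 hσ (mul_pos hρ (sub_pos.2 hab))
    (hdist ▸ mul_pos hρ hdist_pos) (hu.mono hsub) (fun z hz => hnonneg z (hsub hz))
    fun x hx => hside x (hinterior x hx)

end SideOfSlit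

section Estimates

theorem concaveOn_arctan_Ici : ConcaveOn ℝ (Ici 0) Real.arctan := by
  refine AntitoneOn.concaveOn_of_deriv (convex_Ici 0) Real.continuous_arctan.continuousOn
    Real.differentiable_arctan.differentiableOn ?_
  rw [interior_Ici, Real.deriv_arctan]
  intro x hx y _ hxy
  have hx0 : 0 < x := hx
  dsimp only
  gcongr

theorem pi_div_four_mul_le_arctan {x : ℝ} (hx₀ : 0 ≤ x) (hx₁ : x ≤ 1) :
    π / 4 * x ≤ Real.arctan x := by
  have hchord := concaveOn_arctan_Ici.2 self_mem_Ici (mem_Ici.2 zero_le_one)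
    (sub_nonneg.2 hx₁) hx₀ (sub_add_cancel 1 x)
  simpa [mul_comm] using hchord

theorem mul_one_sub_exp_neg_le_one_sub_exp_neg_mul {s : ℝ} (hs₀ : 0 ≤ s) (hs₁ : s ≤ 1)
    (x : ℝ) :
    s * (1 - Real.exp (-x)) ≤ 1 - Real.exp (-(x * s)) := by
  have hconvex := convexOn_exp.2 (mem_univ 0) (mem_univ (-x)) (sub_nonneg.2 hs₁) hs₀
    (sub_add_cancel 1 s)
  rw [smul_zero, zero_add, Real.exp_zero, smul_eq_mul, smul_eq_mul, smul_eq_mul, mul_one,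
    mul_neg, mul_comm s x] at hconvex
  linarith

theorem mul_exp_neg_half_le_sqrt_div_sqrt {s d x : ℝ} (hs₀ : 0 ≤ s) (hs₁ : s ≤ 1) (hd₀ : 0 < d)
    (hd₁ : d ≤ 1) (hx : 0 < x) :
    s * Real.exp (-(x / 2)) ≤ √(1 - Real.exp (-(x * s))) / √(Real.exp (x * d) - 1) := by
  have hden : 0 < Real.exp (x * d) - 1 := by simpa using mul_pos hx hd₀
  have hexp : Real.exp (-x) * (Real.exp x - 1) = 1 - Real.exp (-x) := by
    rw [mul_sub, ← Real.exp_add, neg_add_cancel, Real.exp_zero, mul_one]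
  rw [← Real.sqrt_div' _ hden.le]
  refine Real.le_sqrt_of_sq_le ((le_div_iff₀ hden).2 ?_)
  calc (s * Real.exp (-(x / 2))) ^ 2 * (Real.exp (x * d) - 1)
      = s ^ 2 * (Real.exp (-x) * (Real.exp (x * d) - 1)) := by
        rw [mul_pow, ← Real.exp_nat_mul, mul_assoc]
        ring_nf
    _ ≤ s ^ 1 * (Real.exp (-x) * (Real.exp x - 1)) := by
        gcongr ?_ * (_ * (Real.exp ?_ - 1))
        · exact pow_le_pow_of_le_one hs₀ hs₁ one_le_two
        · exact mul_le_of_le_one_right hx.le hd₁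
    _ ≤ 1 - Real.exp (-(x * s)) := by
        rw [pow_one, hexp]
        exact mul_one_sub_exp_neg_le_one_sub_exp_neg_mul hs₀ hs₁ x

theorem mul_exp_le_arctan_div_pi {r s d : ℝ} (hr : 0 < r) (hs₀ : 0 ≤ s) (hs₁ : s ≤ 1)
    (hd₀ : 0 < d) (hd₁ : d ≤ 1) :
    s / 8 * Real.exp (-2 / r) ≤
      Real.arctan (√(1 - Real.exp (-(π / r * s))) / √(Real.exp (π / r * d) - 1)) / π := by
  have hexp : Real.exp (-2 / r) ≤ Real.exp (-(π / r / 2)) := by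
    rw [Real.exp_le_exp, div_right_comm, ← neg_div]
    gcongr
    linarith [Real.pi_le_four]
  have hexp_one : Real.exp (-(π / r / 2)) ≤ 1 :=
    Real.exp_le_one_iff.2 (neg_nonpos.2 (by positivity))
  have hratio := mul_exp_neg_half_le_sqrt_div_sqrt hs₀ hs₁ hd₀ hd₁ (div_pos Real.pi_pos hr)
  rw [le_div_iff₀ Real.pi_pos]
  calc s / 8 * Real.exp (-2 / r) * π ≤ s / 4 * Real.exp (-(π / r / 2)) * π := by
        gcongr
        norm_num
    _ = π / 4 * (s * Real.exp (-(π / r / 2))) := by ring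
    _ ≤ Real.arctan (s * Real.exp (-(π / r / 2))) :=
        pi_div_four_mul_le_arctan (by positivity) (mul_le_one₀ hs₁ (Real.exp_pos _).le hexp_one)
    _ ≤ _ := Real.arctan_mono hratio

end Estimates

theorem stmt_12_general {r a b t σ : ℝ} (hr : 0 < r) (hab : a < b)
    (hab₁ : b - a ≤ 1) (ht : t ∉ Icc a b) (htd : Metric.infDist t (Icc a b) ≤ 1) (hσ : σ ≠ 0)
    {u : ℂ → ℝ} (hu : HarmonicOnSet u ({z : ℂ | |z.im| < r} \ (Complex.ofReal '' Icc a b)))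
    (hnonneg : ∀ z ∈ {z : ℂ | |z.im| < r} \ (Complex.ofReal '' Icc a b), 0 ≤ u z)
    (hside : ∀ x ∈ Ioo a b, Tendsto u (𝓝[{z : ℂ | 0 < σ * z.im}] (x : ℂ)) (𝓝 1)) :
    (b - a) / 8 * Real.exp (-2 / r) ≤ u t :=
  (mul_exp_le_arctan_div_pi hr (sub_nonneg.2 hab.le) hab₁
    ((isClosed_Icc.notMem_iff_infDist_pos (nonempty_Icc.2 hab.le)).1 ht) htd).trans
    (arctan_div_pi_le_of_tendsto_side_of_Icc hr hab ht hσ hu hnonneg hside)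

/-- Harmonic measure lower bound on the slit: for the slit strip
S = {|Im z| < r} \ I₀ and a real point t with d(t,I₀) ≤ 1, the harmonic measure of each
side I_± of the slit is at least (|I₀|/8)·exp(−2/r). The harmonic measure of the side
indicated by the sign σ = ±1 is realized as the value u(t) of the bounded harmonic
function with boundary value 1 on that side of the slit and 0 elsewhere. -/
theorem stmt_12 (r a b : ℝ) (hr : r ∈ Set.Ioo (0 : ℝ) 1)
    (hab : 0 < b - a) (hab1 : b - a ≤ 1)
    (S : Set ℂ) (hS : S = {z : ℂ | |z.im| < r} \ (Complex.ofReal '' Set.Icc a b))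
    (t : ℝ) (ht : (t : ℂ) ∈ S) (htd : Metric.infDist t (Set.Icc a b) ≤ 1)
    (σ : ℝ) (hσ : σ = 1 ∨ σ = -1)
    (u : ℂ → ℝ) (hu : HarmonicOnSet u S)
    (hbd : ∀ z ∈ S, u z ∈ Set.Icc (0 : ℝ) 1)
    (hside : ∀ x ∈ Set.Ioo a b,
      Filter.Tendsto u (nhdsWithin (x : ℂ) {z : ℂ | 0 < σ * z.im}) (nhds 1))
    (hother : ∀ x ∈ Set.Ioo a b,
      Filter.Tendsto u (nhdsWithin (x : ℂ) {z : ℂ | σ * z.im < 0}) (nhds 0))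
    (hlines : ∀ x : ℝ, ∀ s : ℝ, (s = r ∨ s = -r) →
      Filter.Tendsto u (nhdsWithin ((x : ℂ) + (s : ℂ) * Complex.I) S) (nhds 0)) :
    (b - a) / 8 * Real.exp (-2 / r) ≤ u (t : ℂ) :=
  stmt_12_general hr.1 (sub_pos.1 hab) hab1 (fun h => (hS ▸ ht).2 ⟨t, h, rfl⟩) htd
    (by rcases hσ with rfl | rfl <;> norm_num) (hS ▸ hu) (fun z hz => (hbd z (hS ▸ hz)).1) hside
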